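/- arXiv:1102.2127 — 3 statements merged into one kernel-verified Lean document; each statement's English description precedes it below -/
import Mathlib

section
/- Let G be an idempotent groupoid and n ≥ 3 such that ⟨x₁⋯xₙ⟩_L = ⟨x₁⋯xₙ⟩_R holds for all x₁,…,xₙ ∈ G. Then right multiplications in G are idempotent: (x*y)*y = x*y for all x, y ∈ G. -/
/-!
Write `L = op x`, `R = (op · y)` and `n = k + 3`, and denote `op` by juxtaposition. Repeating an
idempotent factor at one end of the word collapses one of the two bracketings, which leaves two
mirror-image laws:

* `(x z) w = L^(k+1) (z w)` if `x` is idempotent,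
* `w (z y) = R^(k+1) (w z)` if `y` is idempotent.

Taking `z = x`, `w = y` in the first law shows that `L^(k+1)` fixes `x y`, hence the whole orbit of
`x y` under `L`, which contains `L^(k+1) y = (x y) y`. So
`(x (x y)) y = L^(k+1) ((x y) y) = (x y) y`. On the other hand, the second law gives
`x (x y) = R^(k+1) x`, whence `(x (x y)) y = R^(k+1) (x y) = x (y y) = x y`.
-/

/-- The left-associated product `((x * l₁) * l₂) * ⋯ * lₘ`. -/
def leftAssoc {G : Type*} (op : G → G → G) (x : G) (l : List G) : G :=
  l.foldl op x

/-- The right-associated product `x * (l₁ * (l₂ * (⋯ * lₘ)))`. -/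
def rightAssoc {G : Type*} (op : G → G → G) : G → List G → G
  | x, [] => x
  | x, y :: l => op x (rightAssoc op y l)

open Function List

section Products

variable {G : Type*} (op : G → G → G)

theorem leftAssoc_append (x : G) (l₁ l₂ : List G) :
    leftAssoc op x (l₁ ++ l₂) = leftAssoc op (leftAssoc op x l₁) l₂ :=
  foldl_append

theorem leftAssoc_replicate (x y : G) (m : ℕ) :
    leftAssoc op x (replicate m y) = (op · y)^[m] x := by
  induction m generalizing x with
  | zero => rfl
  | succ _ ih => exact ih (op x y)

theorem rightAssoc_replicate_append_cons (x z : G) (l : List G) (m : ℕ) :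
    rightAssoc op x (replicate m x ++ z :: l) = (op x)^[m + 1] (rightAssoc op z l) := by
  induction m with
  | zero => rfl
  | succ m ih =>
    rw [replicate_succ, cons_append, rightAssoc, ih, iterate_succ_apply' _ (m + 1)]

variable {op} {x : G}

theorem leftAssoc_replicate_self (hx : op x x = x) (m : ℕ) :
    leftAssoc op x (replicate m x) = x :=
  (leftAssoc_replicate op x x m).trans (iterate_fixed (f := (op · x)) hx m)

theorem rightAssoc_replicate_self (hx : op x x = x) (m : ℕ) :
    rightAssoc op x (replicate m x) = x := by
  induction m with
  | zero => rfl
  | succ m ih => rw [replicate_succ, rightAssoc, ih, hx]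

end Products

/-- The identity `⟨x₀⋯xₘ⟩_L = ⟨x₀⋯xₘ⟩_R`. The index `m` counts the factors after the first one,
so the identity in `n` variables is the case `m = n - 1`. -/
def LeftAssocEqRightAssoc {G : Type*} (op : G → G → G) (m : ℕ) : Prop :=
  ∀ (x : G) (l : List G), l.length = m → leftAssoc op x l = rightAssoc op x l

namespace LeftAssocEqRightAssoc

variable {G : Type*} {op : G → G → G} {k : ℕ} {x y : G}

theorem op_op_eq_iterate_left (h : LeftAssocEqRightAssoc op (k + 2)) (hx : op x x = x) (z w : G) :
    op (op x z) w = (op x)^[k + 1] (op z w) :=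
  calc op (op x z) w
    _ = leftAssoc op x (replicate k x ++ [z, w]) := by
      rw [leftAssoc_append, leftAssoc_replicate_self hx]; rfl
    _ = rightAssoc op x (replicate k x ++ [z, w]) := h _ _ (by simp)
    _ = (op x)^[k + 1] (op z w) := rightAssoc_replicate_append_cons op x z [w] k

theorem op_op_eq_iterate_right (h : LeftAssocEqRightAssoc op (k + 2)) (hy : op y y = y) (w z : G) :
    op w (op z y) = (op · y)^[k + 1] (op w z) :=
  calc op w (op z y)
    _ = rightAssoc op w (z :: y :: replicate k y) := by
      rw [rightAssoc, rightAssoc, rightAssoc_replicate_self hy]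
    _ = leftAssoc op w (z :: replicate (k + 1) y) := (h _ _ (by simp)).symm
    _ = (op · y)^[k + 1] (op w z) := leftAssoc_replicate op (op w z) y (k + 1)

theorem isPeriodicPt_op (h : LeftAssocEqRightAssoc op (k + 2)) (hx : op x x = x) (y : G) :
    IsPeriodicPt (op x) (k + 1) (op x y) :=
  calc (op x)^[k + 1] (op x y)
    _ = op (op x x) y := (h.op_op_eq_iterate_left hx x y).symm
    _ = op x y := by rw [hx]

theorem isPeriodicPt_op_op (h : LeftAssocEqRightAssoc op (k + 2)) (hx : op x x = x)
    (hy : op y y = y) : IsPeriodicPt (op x) (k + 1) (op (op x y) y) := by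
  have op_op_mem_orbit : op (op x y) y = (op x)^[k] (op x y) := by
    rw [h.op_op_eq_iterate_left hx, hy, iterate_succ_apply]
  rw [op_op_mem_orbit]
  exact (h.isPeriodicPt_op hx y).apply_iterate k

theorem op_op_op_eq_op (h : LeftAssocEqRightAssoc op (k + 2)) (hx : op x x = x)
    (hy : op y y = y) : op (op x (op x y)) y = op x y :=
  calc op (op x (op x y)) y
    _ = op ((op · y)^[k + 1] x) y := by rw [h.op_op_eq_iterate_right hy, hx]
    _ = (op · y)^[k + 1] (op x y) := (iterate_succ_apply' (op · y) (k + 1) x).symm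
    _ = op x (op y y) := (h.op_op_eq_iterate_right hy x y).symm
    _ = op x y := by rw [hy]

end LeftAssocEqRightAssoc

theorem idempotent_leftAssoc_eq_rightAssoc_right_mul_idem_general
    {G : Type*} (op : G → G → G) (n : ℕ) (hn : 3 ≤ n)
    (h : ∀ (x : G) (l : List G), l.length = n - 1 →
      leftAssoc op x l = rightAssoc op x l)
    {x y : G} (hx : op x x = x) (hy : op y y = y) :
    op (op x y) y = op x y := by
  obtain ⟨k, rfl⟩ := Nat.exists_eq_add_of_le' hn
  have h : LeftAssocEqRightAssoc op (k + 2) := h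
  calc op (op x y) y
    _ = (op x)^[k + 1] (op (op x y) y) := (h.isPeriodicPt_op_op hx hy).symm
    _ = op (op x (op x y)) y := (h.op_op_eq_iterate_left hx (op x y) y).symm
    _ = op x y := h.op_op_op_eq_op hx hy

/-- In an idempotent groupoid satisfying `⟨x₁⋯xₙ⟩_L = ⟨x₁⋯xₙ⟩_R` for some `n ≥ 3`,
right multiplications are idempotent: `(x*y)*y = x*y`. -/
theorem idempotent_leftAssoc_eq_rightAssoc_right_mul_idem
    {G : Type*} (op : G → G → G)
    (idem : ∀ x : G, op x x = x)
    (n : ℕ) (hn : 3 ≤ n)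
    (h : ∀ (x : G) (l : List G), l.length = n - 1 →
      leftAssoc op x l = rightAssoc op x l) :
    ∀ x y : G, op (op x y) y = op x y :=
  fun x y =>
    idempotent_leftAssoc_eq_rightAssoc_right_mul_idem_general op n hn h (idem x) (idem y)
end

section
/- Let G be an idempotent groupoid and n ≥ 4 such that for all x₁,…,xₙ ∈ G the identity ⟨x₁⋯xₙ⟩_L = x₁*⟨x₂⋯xₙ⟩_L holds, and such that for all x, y ∈ G the identity (x*y)*x^(n−3) = (x*y)*x^(n−2) holds. Then G is a semigroup, i.e. * is associative. -/
/-- `x * yᵐ`, the left-associated product of `x` followed by `m` copies of `y`. -/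
def lpow {G : Type*} (op : G → G → G) (x y : G) (m : ℕ) : G :=
  leftAssoc op x (List.replicate m y)

/-!
Everything reduces to right idempotence `(x * y) * y = x * y`: then trailing repetitions of the last
factor can be dropped, and `⟨x, y, z, …, z⟩_L = x * ⟨y, z, …, z⟩_L` is associativity.

Filling the `n` slots of the first identity with repeated factors, and using idempotence, leaves
two- and three-variable identities whose length does not depend on `n`, while right multiplication
by `y` becomes periodic on products `x * y`. The second identity stabilises the powers
`(x * (y * x)) * xᵐ`, and a sequence both periodic and stable is constant, so
`(x * (y * x)) * x = x * (y * x)`. Together with the short identities this gives first the flexible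
law and then right idempotence.
-/

/-- The identity `⟨x₁⋯xₙ⟩_L = x₁ * ⟨x₂⋯xₙ⟩_L` for `n = k + 2`: the first factor of a left-associated
product splits off. The list holds the `k` factors after `x₂`. -/
def SplitsHead {G : Type*} (op : G → G → G) (k : ℕ) : Prop :=
  ∀ (x y : G) (l : List G), l.length = k → leftAssoc op (op x y) l = op x (leftAssoc op y l)

section

variable {G : Type*} {op : G → G → G} {k : ℕ}

local notation:70 a:70 "⋆" b:71 => op a b

theorem lpow_succ (x y : G) (m : ℕ) : lpow op x y (m + 1) = lpow op (x⋆y) y m := rfl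

theorem lpow_succ' (x y : G) (m : ℕ) : lpow op x y (m + 1) = lpow op x y m ⋆ y := by
  simp [lpow, leftAssoc, List.replicate_succ']

theorem leftAssoc_replicate_append (x y : G) (m : ℕ) (l : List G) :
    leftAssoc op x (List.replicate m y ++ l) = leftAssoc op (lpow op x y m) l :=
  List.foldl_append

theorem lpow_eq_self {x y : G} (h : x⋆y = x) (m : ℕ) : lpow op x y m = x := by
  induction m with
  | zero => rfl
  | succ m ih => rw [lpow_succ, h, ih]

theorem mul_eq_self_of_lpow_eq {x y : G} {m : ℕ} (periodic : lpow op x y (m + 1) = x)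
    (stable : lpow op x y m = lpow op x y (m + 1)) : x⋆y = x :=
  calc
    x⋆y = lpow op x y m ⋆ y := by rw [stable, periodic]
    _ = lpow op x y (m + 1) := (lpow_succ' x y m).symm
    _ = x := periodic

namespace SplitsHead

theorem lpow_mul (h : SplitsHead op k) (x y z : G) :
    lpow op (x⋆y) z k = x ⋆ lpow op y z k :=
  h x y _ List.length_replicate

theorem assoc_of_right_idem (h : SplitsHead op (k + 1)) (right_idem : ∀ x y, x⋆y⋆y = x⋆y)
    (x y z : G) : x⋆y⋆z = x⋆(y⋆z) := by
  have lpow_eq_mul (a b : G) : lpow op a b (k + 1) = a⋆b := lpow_eq_self (right_idem a b) k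
  simpa only [lpow_eq_mul] using h.lpow_mul x y z

variable [Std.IdempotentOp op]

theorem lpow_mul_self (h : SplitsHead op k) (x y : G) : lpow op (x⋆y) y k = x⋆y := by
  rw [h.lpow_mul, lpow_eq_self (Std.IdempotentOp.idempotent y)]

theorem lpow_sandwich (h : SplitsHead op k) (x y : G) :
    lpow op (x⋆(y⋆x)) x k = x⋆(y⋆x) := by
  rw [h.lpow_mul, h.lpow_mul_self]

theorem lpow_mul_mul (h : SplitsHead op (k + 1)) (x y z : G) :
    lpow op (x⋆y) y k ⋆ z = x⋆(y⋆z) := by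
  have splits := h x y (List.replicate k y ++ [z]) (by simp)
  rwa [leftAssoc_replicate_append, leftAssoc_replicate_append,
    lpow_eq_self (Std.IdempotentOp.idempotent y)] at splits

theorem lpow_mul_mul_mul (h : SplitsHead op (k + 2)) (x y z : G) :
    lpow op (x⋆y) y k ⋆ z ⋆ (y⋆z) = x⋆(y⋆z) := by
  have lpow_split : lpow op (x⋆y) y k ⋆ z ⋆ (y⋆z) = x⋆(y⋆z⋆(y⋆z)) := by
    have splits := h x y (List.replicate k y ++ [z, y⋆z]) (by simp)
    rwa [leftAssoc_replicate_append, leftAssoc_replicate_append,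
      lpow_eq_self (Std.IdempotentOp.idempotent y)] at splits
  rw [lpow_split, Std.IdempotentOp.idempotent (op := op) (y⋆z)]

theorem mul_mul_mul_middle_idem (h : SplitsHead op (k + 1)) (x y z : G) :
    x⋆y⋆(y⋆z) = x⋆y⋆z := by
  rw [← h.lpow_mul_mul, ← lpow_succ, h.lpow_mul_self]

theorem left_idem (h : SplitsHead op (k + 1)) (x y : G) : x⋆(x⋆y) = x⋆y := by
  simpa only [Std.IdempotentOp.idempotent x] using h.mul_mul_mul_middle_idem x x y

theorem left_idem_mul (h : SplitsHead op (k + 1)) (x y z : G) :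
    x⋆(x⋆y⋆z) = x⋆y⋆z := by
  rw [← h.lpow_mul_mul, h.left_idem, lpow_eq_self (Std.IdempotentOp.idempotent (x⋆y))]

theorem mul_mul_mul_right_idem (h : SplitsHead op (k + 2)) (x y z : G) :
    x⋆(y⋆z)⋆(y⋆z) = x⋆y⋆z :=
  calc
    x⋆(y⋆z)⋆(y⋆z) = lpow op (x⋆y⋆y) y k ⋆ z ⋆ (y⋆z) := by
      rw [← lpow_succ, h.lpow_mul_mul]
    _ = x⋆y⋆(y⋆z) := h.lpow_mul_mul_mul (x⋆y) y z
    _ = x⋆y⋆z := h.mul_mul_mul_middle_idem x y z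

theorem sandwich_mul (h : SplitsHead op (k + 1)) (x y : G) : x⋆(y⋆x)⋆y = x⋆y := by
  have lpow_eq : lpow op (x⋆(y⋆x)) y (k + 1) = lpow op x y (k + 1) :=
    calc
      lpow op (x⋆(y⋆x)) y (k + 1) = lpow op (lpow op x y (k + 1) ⋆ x) y (k + 1) := by
        rw [lpow_succ x, h.lpow_mul_mul]
      _ = lpow op x y (k + 1) ⋆ lpow op x y (k + 1) := h.lpow_mul _ x y
      _ = lpow op x y (k + 1) := Std.IdempotentOp.idempotent _
  calc
    x⋆(y⋆x)⋆y = lpow op (x⋆(y⋆x)⋆y) y (k + 1) := (h.lpow_mul_self _ y).symm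
    _ = lpow op (x⋆(y⋆x)) y (k + 1) ⋆ y := lpow_succ' _ y (k + 1)
    _ = lpow op x y (k + 1) ⋆ y := by rw [lpow_eq]
    _ = lpow op (x⋆y) y (k + 1) := (lpow_succ' x y (k + 1)).symm
    _ = x⋆y := h.lpow_mul_self x y

theorem mul_mul_mul_alternating (h : SplitsHead op (k + 1)) (x y : G) :
    x⋆y⋆x⋆y = x⋆y :=
  calc
    x⋆y⋆x⋆y = x⋆y⋆x⋆(x⋆y) := (h.mul_mul_mul_middle_idem (x⋆y) x y).symm
    _ = x⋆(x⋆y⋆x)⋆(x⋆y) := by rw [h.left_idem_mul]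
    _ = x⋆(x⋆y) := h.sandwich_mul x (x⋆y)
    _ = x⋆y := h.left_idem x y

theorem mul_left_sandwich (h : SplitsHead op (k + 1)) (x y : G) : x⋆(y⋆x⋆y) = x⋆y :=
  calc
    x⋆(y⋆x⋆y) = x⋆(y⋆x⋆y⋆x)⋆(y⋆x⋆y) := (h.sandwich_mul x (y⋆x⋆y)).symm
    _ = x⋆(y⋆x)⋆(y⋆x⋆y) := by rw [h.mul_mul_mul_alternating]
    _ = x⋆(y⋆x)⋆y := h.mul_mul_mul_middle_idem x (y⋆x) y
    _ = x⋆y := h.sandwich_mul x y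

theorem flexible (h : SplitsHead op (k + 2)) {x y : G} (absorb : x⋆(y⋆x)⋆x = x⋆(y⋆x)) :
    x⋆y⋆x = x⋆(y⋆x) :=
  calc
    x⋆y⋆x = x⋆(y⋆x)⋆(y⋆x) := (h.mul_mul_mul_right_idem x y x).symm
    _ = x⋆(y⋆x)⋆x⋆(y⋆x) := by rw [absorb]
    _ = x⋆(y⋆x) := h.mul_mul_mul_alternating x (y⋆x)

theorem right_idem (h : SplitsHead op (k + 2)) {x y : G} (absorb : y⋆(x⋆y)⋆y = y⋆(x⋆y)) :
    x⋆y⋆y = x⋆y := by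
  have left_absorb : y⋆x⋆y⋆y = y⋆x⋆y := by rw [h.flexible absorb, absorb]
  calc
    x⋆y⋆y = x⋆(y⋆x⋆y)⋆y := by rw [h.mul_left_sandwich]
    _ = x⋆(y⋆x⋆y⋆y)⋆(y⋆x⋆y⋆y) := (h.mul_mul_mul_right_idem x (y⋆x⋆y) y).symm
    _ = x⋆(y⋆x⋆y)⋆(y⋆x⋆y) := by rw [left_absorb]
    _ = x⋆(y⋆x)⋆y := h.mul_mul_mul_right_idem x (y⋆x) y
    _ = x⋆y := h.sandwich_mul x y

end SplitsHead

end

/-- An idempotent groupoid satisfying, for some `n ≥ 4`, the identity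
`⟨x₁⋯xₙ⟩_L = x₁*⟨x₂⋯xₙ⟩_L` together with `(x*y)*x^(n-3) = (x*y)*x^(n-2)`
must be a semigroup. -/
theorem idempotent_nulla_harom_implies_assoc
    {G : Type*} (op : G → G → G)
    (idem : ∀ x : G, op x x = x)
    (n : ℕ) (hn : 4 ≤ n)
    (h₁ : ∀ (x y : G) (l : List G), (y :: l).length = n - 1 →
      leftAssoc op x (y :: l) = op x (leftAssoc op y l))
    (h₂ : ∀ x y : G, lpow op (op x y) x (n - 3) = lpow op (op x y) x (n - 2)) :
    ∀ x y z : G, op (op x y) z = op x (op y z) := by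
  obtain ⟨k, rfl⟩ := Nat.exists_eq_add_of_le' hn
  have : Std.IdempotentOp op := ⟨idem⟩
  have splits : SplitsHead op (k + 2) := fun x y l hl ↦ h₁ x y l (by simp [hl])
  have absorb (x y : G) : op (op x (op y x)) x = op x (op y x) :=
    mul_eq_self_of_lpow_eq (splits.lpow_sandwich x y) (h₂ x (op y x))
  exact splits.assoc_of_right_idem fun x y ↦ splits.right_idem (absorb y x)
end

section
/- Let G be a groupoid satisfying the 𝓑 identities (x*x = x, x*(x*y) = x*y, x*(y*x) = x*y, (x*y)*x = x*y, (x*y)*y = x*y, (x*y)*(y*x) = x*y) and the identity x*(y*(z*u)) = x*((y*z)*u) for all x, y, z, u ∈ G. Then either G is a semigroup (the operation * is associative), or for every n ≥ 2 the number of distinct n-ary functions Gⁿ → G induced by bracketings of size n equals exactly 2^(n−2); that is, s_G(n) = 2^(n−2) for all n ≥ 2. -/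
/-- A bracketing: a full binary tree. Its leaves, read from left to right,
carry the variables of the bracketed product. -/
inductive Bracketing : Type
  | leaf : Bracketing
  | node : Bracketing → Bracketing → Bracketing

/-- The size of a bracketing: its number of leaves. -/
def Bracketing.size : Bracketing → ℕ
  | .leaf => 1
  | .node P Q => P.size + Q.size

/-- Evaluate a bracketing in a groupoid `(G, op)` on the variables
`f i, f (i+1), …` (assigned to the leaves from left to right). -/
def Bracketing.eval {G : Type*} (op : G → G → G) : Bracketing → (ℕ → G) → ℕ → G
  | .leaf, f, i => f i
  | .node P Q, f, i => op (P.eval op f i) (Q.eval op f (i + P.size))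

/-! Read a bracketing as `(⋯((x₁ * Q₁) * Q₂) ⋯) * Qₖ` along its leftmost branch, and record the
sizes of the left factors. By `x*(y*(z*u)) = x*((y*z)*u)` and `x*(y*x) = x*y` the inner bracketing
of each `Qᵢ` does not matter, so these sizes determine the induced function; they form an arbitrary
subset of `{1, …, n-1}` containing `1`, which gives at most `2 ^ (n - 2)` functions.

Conversely, the `𝓑` identities say precisely that every bracketing of a word in two letters `x`,
`y` that starts with `x` and contains `y` evaluates to `x*y`. If a left factor of `B` ends at
position `p` but none of `C` does, let `Q` be the right factor of `C` that straddles `p`. Put `x`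
before `Q`, `y` on `Q` before `p`, `z` on `Q` from `p` on, and `x*y` after `Q`. Then `C` evaluates
to `x*(y*z)`, because `(x*(y*z))*(x*y) = x*(y*z)`, while `B` evaluates a two-letter word in `x*y`
and `z`, to `(x*y)*z`. -/

/-- The `𝓑` identities: the multiplication table by which the value of a bracketed word in two
letters depends only on its first letter and on whether the other letter occurs. -/
structure BIdentities {G : Type*} (op : G → G → G) : Prop where
  idem (x : G) : op x x = x
  op_self_op (x y : G) : op x (op x y) = op x y
  op_op_self (x y : G) : op x (op y x) = op x y
  op_op_left (x y : G) : op (op x y) x = op x y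
  op_op_right (x y : G) : op (op x y) y = op x y
  op_op_swap (x y : G) : op (op x y) (op y x) = op x y

theorem BIdentities.op_op_op_absorb {G : Type*} {op : G → G → G} (hB : BIdentities op)
    (hA : ∀ x y z u : G, op x (op y (op z u)) = op x (op (op y z) u)) (x y z : G) :
    op (op x (op y z)) (op x y) = op x (op y z) := by
  set w := op x (op y z) with hw
  calc op w (op x y) = op w (op (op x y) w) := (hB.op_op_self _ _).symm
    _ = op w (op (op x y) z) := by rw [hw, hA (op x y), hB.op_self_op]
    _ = op w w := by rw [← hA, ← hw]
    _ = w := hB.idem w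

theorem encard_image_eq_of_eq_iff {α β γ : Type*} {s : Set α} {f : α → β} {g : α → γ}
    (h : ∀ a ∈ s, ∀ b ∈ s, f a = f b ↔ g a = g b) : (f '' s).encard = (g '' s).encard := by
  obtain ⟨t, hts, hf⟩ := Set.exists_subset_bijOn s f
  have hg : Set.InjOn g t := fun a ha b hb hab =>
    hf.injOn ha hb ((h a (hts ha) b (hts hb)).2 hab)
  have himage : g '' t = g '' s := by
    refine (Set.image_mono hts).antisymm ?_
    rintro _ ⟨a, ha, rfl⟩
    obtain ⟨b, hb, hba⟩ := hf.surjOn ⟨a, ha, rfl⟩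
    exact ⟨b, hb, (h b (hts hb) a ha).1 hba⟩
  rw [← hf.image_eq, hf.injOn.encard_image, ← himage, hg.encard_image]

namespace Bracketing

variable {G : Type*} {op : G → G → G}

theorem size_pos (B : Bracketing) : 0 < B.size := by
  cases B with
  | leaf => exact Nat.one_pos
  | node P Q => exact Nat.add_pos_left P.size_pos _

theorem exists_size_eq {n : ℕ} (hn : 0 < n) : ∃ B : Bracketing, B.size = n := by
  induction n, hn using Nat.le_induction with
  | base => exact ⟨leaf, rfl⟩
  | succ n _ ih =>
    obtain ⟨B, rfl⟩ := ih
    exact ⟨node B leaf, rfl⟩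

theorem eval_congr {f g : ℕ → G} (B : Bracketing) {i : ℕ}
    (hfg : Set.EqOn f g (Set.Ico i (i + B.size))) : B.eval op f i = B.eval op g i := by
  induction B generalizing i with
  | leaf => exact hfg (by simp [size])
  | node P Q ihP ihQ =>
    rw [size, ← add_assoc] at hfg
    have hP : P.eval op f i = P.eval op g i :=
      ihP (hfg.mono (Set.Ico_subset_Ico_right (by omega)))
    have hQ : Q.eval op f (i + P.size) = Q.eval op g (i + P.size) :=
      ihQ (hfg.mono (Set.Ico_subset_Ico_left (by omega)))
    rw [eval, eval, hP, hQ]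

/-- The sizes of the proper subtrees along the leftmost branch, that is, the positions at which
the leaf sequence is cut into a left and a right factor along that branch. -/
def leftCuts : Bracketing → Finset ℕ
  | leaf => ∅
  | node P _ => insert P.size P.leftCuts

theorem size_mem_leftCuts_node (P Q : Bracketing) : P.size ∈ (node P Q).leftCuts :=
  Finset.mem_insert_self _ _

theorem lt_size_of_mem_leftCuts {B : Bracketing} {p : ℕ} (hp : p ∈ B.leftCuts) : p < B.size := by
  induction B with
  | leaf => simp [leftCuts] at hp
  | node P Q ihP _ =>
    have := Q.size_pos
    rcases Finset.mem_insert.1 hp with rfl | hp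
    · rw [size]; omega
    · have := ihP hp
      rw [size]; omega

theorem pos_of_mem_leftCuts {B : Bracketing} {p : ℕ} (hp : p ∈ B.leftCuts) : 0 < p := by
  induction B with
  | leaf => simp [leftCuts] at hp
  | node P Q ihP _ =>
    rcases Finset.mem_insert.1 hp with rfl | hp
    exacts [P.size_pos, ihP hp]

theorem one_mem_leftCuts (P Q : Bracketing) : 1 ∈ (node P Q).leftCuts := by
  induction P generalizing Q with
  | leaf => exact size_mem_leftCuts_node leaf Q
  | node P₁ P₂ ih _ => exact Finset.mem_insert_of_mem (ih P₂)

theorem size_notMem_leftCuts (B : Bracketing) : B.size ∉ B.leftCuts := fun h =>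
  (lt_size_of_mem_leftCuts h).false

theorem le_size_left_of_mem_leftCuts {P Q : Bracketing} {p : ℕ} (hp : p ∈ (node P Q).leftCuts) :
    p ≤ P.size := by
  rcases Finset.mem_insert.1 hp with rfl | hp
  exacts [le_rfl, (lt_size_of_mem_leftCuts hp).le]

theorem leftCuts_node_inj {P Q P' Q' : Bracketing}
    (h : (node P Q).leftCuts = (node P' Q').leftCuts) :
    P.size = P'.size ∧ P.leftCuts = P'.leftCuts := by
  have hsize : P.size = P'.size :=
    (le_size_left_of_mem_leftCuts (h ▸ size_mem_leftCuts_node P Q)).antisymm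
      (le_size_left_of_mem_leftCuts (h ▸ size_mem_leftCuts_node P' Q'))
  refine ⟨hsize, ?_⟩
  have herase : (insert P.size P.leftCuts).erase P.size =
      (insert P'.size P'.leftCuts).erase P'.size := congrArg₂ Finset.erase h hsize
  rwa [Finset.erase_insert P.size_notMem_leftCuts,
    Finset.erase_insert P'.size_notMem_leftCuts] at herase

theorem exists_leftCuts_eq {S : Finset ℕ} (h1 : 1 ∈ S) (hS : ∀ p ∈ S, 0 < p) {n : ℕ}
    (hn : ∀ p ∈ S, p < n) : ∃ B : Bracketing, B.size = n ∧ B.leftCuts = S := by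
  induction S using Finset.induction_on_max generalizing n with
  | empty => simp at h1
  | insert p T hT ih =>
    obtain ⟨Q, hQ⟩ := exists_size_eq (Nat.sub_pos_of_lt (hn p (Finset.mem_insert_self p T)))
    obtain ⟨P, hP, hPT⟩ : ∃ P : Bracketing, P.size = p ∧ P.leftCuts = T := by
      rcases Finset.mem_insert.1 h1 with rfl | h1T
      · refine ⟨leaf, rfl, (Finset.eq_empty_of_forall_notMem fun q hq => ?_).symm⟩
        have := hT q hq
        have := hS q (Finset.mem_insert_of_mem hq)
        omega
      · exact ih h1T (fun q hq => hS q (Finset.mem_insert_of_mem hq)) hT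
    refine ⟨node P Q, ?_, ?_⟩
    · have := hn p (Finset.mem_insert_self p T)
      rw [size, hP, hQ]; omega
    · rw [leftCuts, hP, hPT]

theorem image_leftCuts {n : ℕ} (hn : 2 ≤ n) :
    leftCuts '' {B | B.size = n} = Finset.Icc {1} (Finset.Ico 1 n) := by
  ext S
  have mem_Icc_iff : S ∈ (Finset.Icc {1} (Finset.Ico 1 n) : Set (Finset ℕ)) ↔
      1 ∈ S ∧ ∀ p ∈ S, 0 < p ∧ p < n := by
    simp [Finset.subset_iff, Nat.succ_le_iff]
  rw [mem_Icc_iff]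
  constructor
  · rintro ⟨B, rfl, rfl⟩
    refine ⟨?_, fun p hp => ⟨pos_of_mem_leftCuts hp, lt_size_of_mem_leftCuts hp⟩⟩
    cases B with
    | leaf => simp [size] at hn
    | node P Q => exact one_mem_leftCuts P Q
  · rintro ⟨h1, hS⟩
    exact exists_leftCuts_eq h1 (fun p hp => (hS p hp).1) fun p hp => (hS p hp).2

section LeftCutsDetermineEval

variable (hA : ∀ x y z u : G, op x (op y (op z u)) = op x (op (op y z) u))
include hA

theorem op_op_eval_eq_foldr (B : Bracketing) (f : ℕ → G) (i : ℕ) (a c : G) :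
    op a (op (B.eval op f i) c) = op a (((List.range' i B.size).map f).foldr op c) := by
  induction B generalizing i a c with
  | leaf => rfl
  | node P Q ihP ihQ =>
    rw [eval, ← hA, ihQ, ihP, ← List.foldr_append, ← List.map_append, List.range'_append_1, size]

theorem op_eval_congr (hself : ∀ x y : G, op x (op y x) = op x y) {P Q : Bracketing}
    (h : P.size = Q.size) (f : ℕ → G) (i : ℕ) (a : G) :
    op a (P.eval op f i) = op a (Q.eval op f i) := by
  -- `a * P = a * (P * a)` supplies the trailing factor that the flattening lemma needs.
  rw [← hself, op_op_eval_eq_foldr hA, h, ← op_op_eval_eq_foldr hA, hself]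

theorem eval_eq_of_leftCuts_eq (hself : ∀ x y : G, op x (op y x) = op x y) {B C : Bracketing}
    (hsize : B.size = C.size) (hcuts : B.leftCuts = C.leftCuts) (f : ℕ → G) (i : ℕ) :
    B.eval op f i = C.eval op f i := by
  induction B generalizing C with
  | leaf =>
    cases C with
    | leaf => rfl
    | node P Q => exact absurd hcuts.symm (Finset.insert_ne_empty _ _)
  | node P Q ihP _ =>
    cases C with
    | leaf => exact absurd hcuts (Finset.insert_ne_empty _ _)
    | node P' Q' =>
      obtain ⟨hP, hPcuts⟩ := leftCuts_node_inj hcuts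
      have hQ : Q.size = Q'.size := by simpa [size, hP] using hsize
      rw [eval, eval, ihP hP hPcuts, hP, op_eval_congr hA hself hQ]

end LeftCutsDetermineEval

section TwoLetterWords

variable (hB : BIdentities op)
include hB

theorem eval_eq_or_eq_op (B : Bracketing) {f : ℕ → G} {i : ℕ} {x y : G} (hx : f i = x)
    (hxy : ∀ j ∈ Set.Ico i (i + B.size), f j = x ∨ f j = y) :
    B.eval op f i = x ∨ B.eval op f i = op x y := by
  induction B generalizing i x y with
  | leaf => exact Or.inl hx
  | node P Q ihP ihQ =>
    simp only [size, Set.mem_Ico] at *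
    have hP := ihP hx fun j hj => hxy j (by omega)
    have hQxy (j : ℕ) (hj : i + P.size ≤ j ∧ j < i + P.size + Q.size) : f j = x ∨ f j = y :=
      hxy j (by omega)
    rw [eval]
    rcases hQxy (i + P.size) (by have := Q.size_pos; omega) with hQx | hQy
    · rcases hP with hP | hP <;> rcases ihQ hQx hQxy with hQ | hQ <;>
        simp [hP, hQ, hB.idem, hB.op_self_op, hB.op_op_left]
    · rcases hP with hP | hP <;> rcases ihQ hQy fun j hj => (hQxy j hj).symm with hQ | hQ <;>
        simp [hP, hQ, hB.op_op_self, hB.op_op_right, hB.op_op_swap]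

theorem eval_eq_op (B : Bracketing) {f : ℕ → G} {i : ℕ} {x y : G} (hx : f i = x)
    (hxy : ∀ j ∈ Set.Ico i (i + B.size), f j = x ∨ f j = y)
    (hy : ∃ j ∈ Set.Ico i (i + B.size), f j = y) : B.eval op f i = op x y := by
  induction B generalizing i x y with
  | leaf =>
    obtain ⟨j, hj, hjy⟩ := hy
    obtain rfl : j = i := by simp only [size, Set.mem_Ico] at hj; omega
    rw [← hx.symm.trans hjy, hB.idem, eval, hx]
  | node P Q ihP ihQ =>
    simp only [size, Set.mem_Ico] at *
    have hPxy (j : ℕ) (hj : i ≤ j ∧ j < i + P.size) : f j = x ∨ f j = y := hxy j (by omega)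
    have hQxy (j : ℕ) (hj : i + P.size ≤ j ∧ j < i + P.size + Q.size) : f j = x ∨ f j = y :=
      hxy j (by omega)
    have hP := eval_eq_or_eq_op hB P hx hPxy
    rw [eval]
    rcases hQxy (i + P.size) (by have := Q.size_pos; omega) with hQx | hQy
    · have hQ := eval_eq_or_eq_op hB Q hQx hQxy
      obtain ⟨j, hj, hjy⟩ := hy
      rcases lt_or_ge j (i + P.size) with hjP | hjQ
      · rw [ihP hx hPxy ⟨j, by omega, hjy⟩]
        rcases hQ with hQ | hQ <;> simp [hQ, hB.idem, hB.op_op_left]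
      · rw [ihQ hQx hQxy ⟨j, by omega, hjy⟩]
        rcases hP with hP | hP <;> simp [hP, hB.idem, hB.op_self_op]
    · rcases hP with hP | hP <;>
        rcases eval_eq_or_eq_op hB Q hQy fun j hj => (hQxy j hj).symm with hQ | hQ <;>
        simp [hP, hQ, hB.op_op_self, hB.op_op_right, hB.op_op_swap]

theorem eval_const (B : Bracketing) {f : ℕ → G} {i : ℕ} {x : G}
    (hx : ∀ j ∈ Set.Ico i (i + B.size), f j = x) : B.eval op f i = x := by
  have hi : i ∈ Set.Ico i (i + B.size) := by simp [B.size_pos]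
  simpa [hB.idem] using eval_eq_or_eq_op hB B (hx i hi) fun j hj => Or.inl (b := f j = x) (hx j hj)

theorem eval_eq_op_of_mem_leftCuts {B : Bracketing} {p : ℕ} (hp : p ∈ B.leftCuts) {f : ℕ → G}
    {i : ℕ} {t z : G} (ht : ∀ P : Bracketing, P.size = p → P.eval op f i = t) (hz : f (i + p) = z)
    (hzt : ∀ j ∈ Set.Ico (i + p) (i + B.size), f j = z ∨ f j = t) :
    B.eval op f i = op t z := by
  induction B with
  | leaf => simp [leftCuts] at hp
  | node P Q ihP _ =>
    simp only [size, Set.mem_Ico] at *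
    rw [eval]
    rcases Finset.mem_insert.1 hp with rfl | hp
    · rw [ht P rfl]
      rcases eval_eq_or_eq_op hB Q hz fun j hj => hzt j (by simpa [add_assoc] using hj)
        with hQ | hQ <;> simp [hQ, hB.op_op_self]
    · have hpP := lt_size_of_mem_leftCuts hp
      have hQzt (j : ℕ) (hj : i + P.size ≤ j ∧ j < i + P.size + Q.size) : f j = z ∨ f j = t :=
        hzt j (by omega)
      rw [ihP hp fun j hj => hzt j (by omega)]
      rcases hQzt (i + P.size) (by have := Q.size_pos; omega) with hQz | hQt
      · rcases eval_eq_or_eq_op hB Q hQz hQzt with hQ | hQ <;>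
          simp [hQ, hB.op_op_right, hB.op_op_swap]
      · rcases eval_eq_or_eq_op hB Q hQt fun j hj => (hQzt j hj).symm with hQ | hQ <;>
          simp [hQ, hB.idem, hB.op_op_left]

end TwoLetterWords

section Separation

/-- The word `xx⋯ yy⋯ zz⋯ (x*y)(x*y)⋯` whose letter changes at the positions `q`, `p` and `s`. It
separates a bracketing with a left factor ending at `p` from one with a right factor occupying the
positions from `q` to `s - 1`. -/
def separatingWord (op : G → G → G) (x y z : G) (q p s : ℕ) : ℕ → G := fun j =>
  if j < q then x else if j < p then y else if j < s then z else op x y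

variable {x y z : G} {q p s j : ℕ}

theorem separatingWord_of_lt (hj : j < q) : separatingWord op x y z q p s j = x :=
  if_pos hj

theorem separatingWord_of_mem_left (hj : j ∈ Set.Ico q p) :
    separatingWord op x y z q p s j = y := by
  simp [separatingWord, hj.1.not_gt, hj.2]

theorem separatingWord_of_mem_right (hqp : q ≤ p) (hj : j ∈ Set.Ico p s) :
    separatingWord op x y z q p s j = z := by
  simp [separatingWord, (hqp.trans hj.1).not_gt, hj.1.not_gt, hj.2]

theorem separatingWord_of_ge (hqp : q ≤ p) (hps : p ≤ s) (hj : s ≤ j) :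
    separatingWord op x y z q p s j = op x y := by
  simp [separatingWord, ((hqp.trans hps).trans hj).not_gt, (hps.trans hj).not_gt, hj.not_gt]

variable (hB : BIdentities op)
include hB

theorem eval_separatingWord_of_mem_leftCuts {B : Bracketing} (hp : p ∈ B.leftCuts) (hq : 0 < q)
    (hqp : q < p) (hps : p < s) :
    B.eval op (separatingWord op x y z q p s) 0 = op (op x y) z := by
  refine eval_eq_op_of_mem_leftCuts hB hp ?_ ?_ ?_
  · rintro P rfl
    refine eval_eq_op hB P (separatingWord_of_lt hq) (fun j hj => ?_) ⟨q, ?_, ?_⟩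
    · rw [zero_add] at hj
      exact (lt_or_ge j q).imp separatingWord_of_lt
        fun hqj => separatingWord_of_mem_left ⟨hqj, hj.2⟩
    · simpa using hqp
    · exact separatingWord_of_mem_left ⟨le_rfl, hqp⟩
  · rw [zero_add]
    exact separatingWord_of_mem_right hqp.le ⟨le_rfl, hps⟩
  · intro j hj
    rw [zero_add] at hj
    exact (lt_or_ge j s).imp (fun hjs => separatingWord_of_mem_right hqp.le ⟨hj.1, hjs⟩)
      (separatingWord_of_ge hqp.le hps.le)

variable (hA : ∀ x y z u : G, op x (op y (op z u)) = op x (op (op y z) u))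
include hA

theorem exists_eval_separatingWord_of_notMem_leftCuts {B : Bracketing} (hp : p ∉ B.leftCuts)
    (hp0 : 0 < p) (hpB : p < B.size) :
    ∃ q s, 0 < q ∧ q < p ∧ p < s ∧ s ≤ B.size ∧
      ∀ x y z, B.eval op (separatingWord op x y z q p s) 0 = op x (op y z) := by
  induction B with
  | leaf => simp only [size] at hpB; omega
  | node P Q ihP _ =>
    rw [leftCuts, Finset.mem_insert, not_or] at hp
    rw [size] at hpB ⊢
    rcases lt_or_gt_of_ne hp.1 with hpP | hPp
    · obtain ⟨q, s, hq, hqp, hps, hsP, heval⟩ := ihP hp.2 hpP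
      refine ⟨q, s, hq, hqp, hps, by omega, fun x y z => ?_⟩
      have hQ : Q.eval op (separatingWord op x y z q p s) (0 + P.size) = op x y :=
        eval_const hB Q fun j hj =>
          separatingWord_of_ge hqp.le hps.le (hsP.trans (by simpa using hj.1))
      rw [eval, heval, hQ, hB.op_op_op_absorb hA]
    · refine ⟨P.size, P.size + Q.size, P.size_pos, hPp, hpB, le_rfl, fun x y z => ?_⟩
      have hP : P.eval op (separatingWord op x y z P.size p (P.size + Q.size)) 0 = x :=
        eval_const hB P fun j hj => separatingWord_of_lt (by simpa using hj.2)
      have hQ : Q.eval op (separatingWord op x y z P.size p (P.size + Q.size)) (0 + P.size) =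
          op y z := by
        rw [zero_add]
        refine eval_eq_op hB Q (separatingWord_of_mem_left ⟨le_rfl, hPp⟩) (fun j hj => ?_)
          ⟨p, ⟨hPp.le, hpB⟩, separatingWord_of_mem_right hPp.le ⟨le_rfl, hpB⟩⟩
        exact (lt_or_ge j p).imp (fun hjp => separatingWord_of_mem_left ⟨hj.1, hjp⟩)
          fun hpj => separatingWord_of_mem_right hPp.le ⟨hpj, hj.2⟩
      rw [eval, hP, hQ]

theorem leftCuts_subset_of_eval_eq (hna : ¬ ∀ x y z : G, op (op x y) z = op x (op y z))
    {B C : Bracketing} (hsize : B.size = C.size)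
    (heval : ∀ f : ℕ → G, B.eval op f 0 = C.eval op f 0) : B.leftCuts ⊆ C.leftCuts := by
  intro p hpB
  by_contra hpC
  obtain ⟨q, s, hq, hqp, hps, -, hC⟩ := exists_eval_separatingWord_of_notMem_leftCuts hB hA hpC
    (pos_of_mem_leftCuts hpB) (hsize ▸ lt_size_of_mem_leftCuts hpB)
  refine hna fun x y z => ?_
  rw [← eval_separatingWord_of_mem_leftCuts hB hpB hq hqp hps, heval, hC]

theorem eval_eq_iff_leftCuts_eq (hna : ¬ ∀ x y z : G, op (op x y) z = op x (op y z))
    {B C : Bracketing} (hsize : B.size = C.size) :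
    (∀ f : ℕ → G, B.eval op f 0 = C.eval op f 0) ↔ B.leftCuts = C.leftCuts :=
  ⟨fun heval => (leftCuts_subset_of_eval_eq hB hA hna hsize heval).antisymm
      (leftCuts_subset_of_eval_eq hB hA hna hsize.symm fun f => (heval f).symm),
    fun hcuts f => eval_eq_of_leftCuts_eq hA hB.op_op_self hsize hcuts f 0⟩

end Separation

/-- The `n`-ary function induced by a bracketing. Only bracketings of size `n` are meant; for
larger ones the variables are reused cyclically. -/
def inducedFun (op : G → G → G) (n : ℕ) [NeZero n] (B : Bracketing) (v : Fin n → G) : G :=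
  B.eval op (fun i => v (Fin.ofNat n i)) 0

theorem inducedFun_eq_iff {n : ℕ} [NeZero n] {B C : Bracketing} (hB : B.size = n)
    (hC : C.size = n) :
    B.inducedFun op n = C.inducedFun op n ↔ ∀ f : ℕ → G, B.eval op f 0 = C.eval op f 0 := by
  have inducedFun_restrict {D : Bracketing} (hD : D.size = n) (f : ℕ → G) :
      D.inducedFun op n (fun j => f j) = D.eval op f 0 :=
    D.eval_congr fun j hj => by
      have hjn : j < n := by simpa [hD] using hj
      simp [Nat.mod_eq_of_lt hjn]
  refine ⟨fun h f => ?_, fun h => funext fun v => h _⟩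
  rw [← inducedFun_restrict hB, h, inducedFun_restrict hC]

theorem encard_image_inducedFun (hB : BIdentities op)
    (hA : ∀ x y z u : G, op x (op y (op z u)) = op x (op (op y z) u))
    (hna : ¬ ∀ x y z : G, op (op x y) z = op x (op y z)) {n : ℕ} [NeZero n] (hn : 2 ≤ n) :
    (inducedFun op n '' {B | B.size = n}).encard = (2 ^ (n - 2) : ℕ) := by
  have hiff : ∀ B ∈ {B : Bracketing | B.size = n}, ∀ C ∈ {B : Bracketing | B.size = n},
      B.inducedFun op n = C.inducedFun op n ↔ B.leftCuts = C.leftCuts := fun B hBn C hCn =>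
    (inducedFun_eq_iff hBn hCn).trans (eval_eq_iff_leftCuts_eq hB hA hna (hBn.trans hCn.symm))
  have hsub : ({1} : Finset ℕ) ⊆ Finset.Ico 1 n :=
    Finset.singleton_subset_iff.2 (Finset.mem_Ico.2 ⟨le_rfl, hn⟩)
  rw [encard_image_eq_of_eq_iff hiff, image_leftCuts hn, Set.encard_coe_eq_coe_finsetCard,
    Finset.card_Icc_finset hsub, Nat.card_Ico, Finset.card_singleton, Nat.sub_sub]

end Bracketing

/-- A groupoid satisfying the 𝓑 identities together with
`x*(y*(z*u)) = x*((y*z)*u)` is either a semigroup or its associative spectrum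
is exactly `s_G(n) = 2^(n-2)` for all `n ≥ 2`. -/
theorem B_cap_A_spectrum
    {G : Type*} (op : G → G → G)
    (hB1 : ∀ x : G, op x x = x)
    (hB2 : ∀ x y : G, op x (op x y) = op x y)
    (hB3 : ∀ x y : G, op x (op y x) = op x y)
    (hB4 : ∀ x y : G, op (op x y) x = op x y)
    (hB5 : ∀ x y : G, op (op x y) y = op x y)
    (hB6 : ∀ x y : G, op (op x y) (op y x) = op x y)
    (hA : ∀ x y z u : G, op x (op y (op z u)) = op x (op (op y z) u)) :
    (∀ x y z : G, op (op x y) z = op x (op y z)) ∨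
    (∀ n : ℕ, ∀ hn : 2 ≤ n,
      Set.Finite {F : (Fin n → G) → G | ∃ B : Bracketing, B.size = n ∧
        F = fun v => B.eval op (fun i => v ⟨i % n, Nat.mod_lt i (by omega)⟩) 0} ∧
      Set.ncard {F : (Fin n → G) → G | ∃ B : Bracketing, B.size = n ∧
        F = fun v => B.eval op (fun i => v ⟨i % n, Nat.mod_lt i (by omega)⟩) 0} =
        2 ^ (n - 2)) := by
  by_cases hna : ∀ x y z : G, op (op x y) z = op x (op y z)
  · exact Or.inl hna
  refine Or.inr fun n hn => ?_
  have hB : BIdentities op := ⟨hB1, hB2, hB3, hB4, hB5, hB6⟩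
  have : NeZero n := ⟨by omega⟩
  have hset : {F : (Fin n → G) → G | ∃ B : Bracketing, B.size = n ∧
      F = fun v => B.eval op (fun i => v ⟨i % n, Nat.mod_lt i (by omega)⟩) 0} =
      Bracketing.inducedFun op n '' {B | B.size = n} :=
    Set.ext fun F => exists_congr fun B => and_congr_right fun _ => eq_comm
  rw [hset]
  have hcard := Bracketing.encard_image_inducedFun hB hA hna hn
  exact ⟨Set.finite_of_encard_eq_coe hcard, by rw [Set.ncard_def, hcard, ENat.toNat_natCast]⟩
end
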